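/- Let m ≥ 1 and q = 2^m. Every zero-fixing automorphism of the code M_q ⊆ F_q^{q+1} (the dual of the MDS code M_q^⊥) is semilinear, i.e., Aut0(M_q) = AutL_2(M_q) = AutS(M_q); moreover, Aut0(M_q) is isomorphic to a subgroup of the general semilinear group ΓL(2,q), so its order divides m·(q²−1)·(q²−q). -/

import Mathlib

open Finset

/-- The dual of a code (as a set of words) with respect to the standard inner product. -/
def dualSet {F : Type*} [CommRing F] {ι : Type*} [Fintype ι] (C : Set (ι → F)) :
    Set (ι → F) :=
  {y | ∀ x ∈ C, ∑ i, x i * y i = 0}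

/-- Zero-fixing automorphisms of a code. -/
def aut0Set {F : Type*} [Zero F] {ι : Type*} (C : Set (ι → F)) :
    Set (Equiv.Perm (ι → F)) :=
  {e | (∃ (π : Equiv.Perm ι) (σ : ι → Equiv.Perm F), (∀ i, σ i 0 = 0) ∧
        ∀ v i, e v i = σ i (v (π⁻¹ i))) ∧ ⇑e '' C = C}

/-- `F₂`-linear automorphisms of a code over a field of characteristic 2. -/
def autL2Set {F : Type*} [Field F] {ι : Type*} (C : Set (ι → F)) :
    Set (Equiv.Perm (ι → F)) :=
  {e | (∃ (π : Equiv.Perm ι) (σ : ι → Equiv.Perm F),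
        (∀ i x y, σ i (x + y) = σ i x + σ i y) ∧
        ∀ v i, e v i = σ i (v (π⁻¹ i))) ∧ ⇑e '' C = C}

/-- Semilinear automorphisms of a code over a field `F`. -/
def autSSet {F : Type*} [Field F] {ι : Type*} (C : Set (ι → F)) :
    Set (Equiv.Perm (ι → F)) :=
  {e | (∃ (π : Equiv.Perm ι) (τ : F ≃+* F) (c : ι → F), (∀ i, c i ≠ 0) ∧
        ∀ v i, e v i = c i * τ (v (π⁻¹ i))) ∧ ⇑e '' C = C}

/-- The general semilinear group `ΓL(K/F)` of a field extension `K` of `F`, viewed as the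
set of those permutations of `K` that are additive and semilinear over `F`. -/
def gammaLSet (F K : Type*) [Field F] [Field K] [Algebra F K] :
    Set (Equiv.Perm K) :=
  {e | ∃ τ : F ≃+* F, (∀ x y : K, e (x + y) = e x + e y) ∧
        ∀ (a : F) (x : K), e (algebraMap F K a * x) = algebraMap F K (τ a) * e x}

/-- A linear code is MDS of minimum distance four when no nonzero word is supported on three
coordinates, and every set of four coordinates is the support of a word. -/
structure IsDistanceFourMDS {F : Type*} [Field F] {ι : Type*} (C : Submodule F (ι → F)) :
    Prop where
  eq_zero : ∀ y ∈ C, ∀ s : Finset ι, #s ≤ 3 → (∀ l ∉ s, y l = 0) → y = 0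
  exists_word : ∀ s : Finset ι, #s = 4 → ∃ y ∈ C, (∀ l ∈ s, y l ≠ 0) ∧ ∀ l ∉ s, y l = 0

namespace IsDistanceFourMDS

variable {F : Type*} [Field F] {ι : Type*} [DecidableEq ι]
  {C : Submodule F (ι → F)}

/-- There is a word supported on four given coordinates, normalized at the first one. -/
theorem exists_normalized_word (hC : IsDistanceFourMDS C) {i j c d : ι}
    (hij : i ≠ j) (hic : i ≠ c) (hid : i ≠ d) (hjc : j ≠ c) (hjd : j ≠ d) (hcd : c ≠ d) :
    ∃ y ∈ C, y i = 1 ∧ y j ≠ 0 ∧ y d ≠ 0 ∧ ∀ l, l ≠ i → l ≠ j → l ≠ c → l ≠ d → y l = 0 := by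
  obtain ⟨y, hy, hne, hz⟩ := hC.exists_word {i, j, c, d} (by simp [*])
  have hi := hne i (by simp)
  refine ⟨(y i)⁻¹ • y, C.smul_mem _ hy, by simp [hi], ?_, ?_, fun l h₁ h₂ h₃ h₄ => ?_⟩
  · simp [hi, hne j (by simp)]
  · simp [hi, hne d (by simp)]
  · simp [hz l (by simp [h₁, h₂, h₃, h₄])]

/-- A word vanishing outside three coordinates vanishes. -/
theorem apply_eq_zero (hC : IsDistanceFourMDS C) {y : ι → F} (hy : y ∈ C) (a b c : ι)
    (h : ∀ l, l ≠ a → l ≠ b → l ≠ c → y l = 0) (i : ι) : y i = 0 := by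
  have : y = 0 := hC.eq_zero y hy {a, b, c} card_le_three fun l hl => by
    simp only [mem_insert, mem_singleton, not_or] at hl
    exact h l hl.1 hl.2.1 hl.2.2
  simp [this]

variable {e : (ι → F) → (ι → F)} {π : Equiv.Perm ι} {s : ι → Equiv.Perm F}

/-- A monomial map vanishing at the images of all but three coordinates vanishes. -/
theorem apply_perm_eq_zero (hC : IsDistanceFourMDS C) (π : Equiv.Perm ι) {y : ι → F} (hy : y ∈ C)
    (a b c : ι) (h : ∀ l, l ≠ a → l ≠ b → l ≠ c → y (π l) = 0) (i : ι) : y (π i) = 0 :=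
  hC.apply_eq_zero hy (π a) (π b) (π c) (fun l h₁ h₂ h₃ => by
    simpa using h (π⁻¹ l) (by rintro rfl; simp at h₁) (by rintro rfl; simp at h₂)
      (by rintro rfl; simp at h₃)) (π i)

theorem map_add (hC : IsDistanceFourMDS C) [Fintype ι] (hι : 5 ≤ Fintype.card ι)
    (he : ∀ v ∈ C, e v ∈ C) (hes : ∀ v i, e v (π i) = s i (v i)) (h0 : ∀ i, s i 0 = 0)
    (i : ι) (x y : F) : s i (x + y) = s i x + s i y := by
  have hex (t : Finset ι) (ht : #t < 5) : ∃ k, k ∉ t := by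
    by_contra! h
    have := card_le_card (s := univ) (t := t) fun k _ => h k
    rw [card_univ] at this
    lia
  obtain ⟨k, hk⟩ := hex {i} (by simp)
  obtain ⟨l, hl⟩ := hex {i, k} (card_le_two.trans_lt (by simp))
  obtain ⟨a, ha⟩ := hex {i, k, l} (card_le_three.trans_lt (by simp))
  obtain ⟨b, hb⟩ := hex {i, k, l, a} (card_le_four.trans_lt (by simp))
  simp only [mem_insert, mem_singleton, not_or] at hk hl ha hb
  obtain ⟨A, hA, hAi, -, -, hAz⟩ := hC.exists_normalized_word (i := i) (j := k) (c := l) (d := a)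
    (by grind) (by grind) (by grind) (by grind) (by grind) (by grind)
  obtain ⟨B, hB, hBi, -, -, hBz⟩ := hC.exists_normalized_word (i := i) (j := k) (c := l) (d := b)
    (by grind) (by grind) (by grind) (by grind) (by grind) (by grind)
  have hz := hC.apply_perm_eq_zero π (y := e (x • A + y • B) - e (x • A) - e (y • B))
    (C.sub_mem (C.sub_mem (he _ (C.add_mem (C.smul_mem _ hA) (C.smul_mem _ hB)))
      (he _ (C.smul_mem _ hA))) (he _ (C.smul_mem _ hB))) i k l (fun p h₁ h₂ h₃ => by
        simp only [Pi.sub_apply, hes, Pi.add_apply, Pi.smul_apply, smul_eq_mul]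
        by_cases hpa : p = a
        · rw [hBz p h₁ h₂ h₃ (by grind)]
          simp [h0]
        · rw [hAz p h₁ h₂ h₃ hpa]
          simp [h0]) i
  simp only [Pi.sub_apply, hes, Pi.add_apply, Pi.smul_apply, smul_eq_mul, hAi, hBi, mul_one] at hz
  linear_combination hz

/-- Scaling a word supported on four coordinates transports the permutation of the symbols at one
coordinate to another coordinate. -/
theorem map_mul_apply (hC : IsDistanceFourMDS C)
    (he : ∀ v ∈ C, e v ∈ C) (hes : ∀ v i, e v (π i) = s i (v i)) (h0 : ∀ i, s i 0 = 0)
    {i j c d : ι} {y : ι → F} (hy : y ∈ C) (hi : y i = 1)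
    (hz : ∀ l, l ≠ i → l ≠ j → l ≠ c → l ≠ d → y l = 0) (x : F) :
    s j (x * y j) = s i x / s i 1 * s j (y j) := by
  have h1 : s i 1 ≠ 0 := fun h => one_ne_zero ((s i).injective (h.trans (h0 i).symm))
  have := hC.apply_perm_eq_zero π (y := e (x • y) - (s i x / s i 1) • e y)
    (C.sub_mem (he _ (C.smul_mem _ hy)) (C.smul_mem _ (he _ hy))) j c d (fun p h₁ h₂ h₃ => by
      simp only [Pi.sub_apply, hes, Pi.smul_apply, smul_eq_mul]
      by_cases hp : p = i
      · simp [hp, hi, h1]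
      · simp [hz p hp h₁ h₂ h₃, h0]) j
  simpa [hes, sub_eq_zero] using this

/-- The nonzero scalars whose multiplication is carried by `σ` to multiplication by a scalar. -/
def multipliers (σ : Equiv.Perm F) : Subgroup Fˣ where
  carrier := {a | ∃ b : Fˣ, ∀ x, σ (a * x) = b * σ x}
  one_mem' := ⟨1, by simp⟩
  mul_mem' := by
    rintro a a' ⟨b, hb⟩ ⟨b', hb'⟩
    exact ⟨b * b', fun x => by simp [mul_assoc, hb, hb']⟩
  inv_mem' := by
    rintro a ⟨b, hb⟩
    exact ⟨b⁻¹, fun x => by rw [Units.eq_inv_mul_iff_mul_eq, ← hb, Units.mul_inv_cancel_left]⟩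

theorem multipliers_eq_top (hC : IsDistanceFourMDS C) [Fintype ι] [Fintype F]
    (hF : 4 ≤ Fintype.card F) (hι : Fintype.card ι = Fintype.card F + 1)
    (he : ∀ v ∈ C, e v ∈ C) (hes : ∀ v i, e v (π i) = s i (v i)) (h0 : ∀ i, s i 0 = 0)
    {i j : ι} (hij : i ≠ j) : multipliers (s j) = ⊤ := by
  obtain ⟨c, hc⟩ : ∃ c, c ∉ ({i, j} : Finset ι) := by
    by_contra! h
    have := card_le_card (s := univ) (t := {i, j}) fun k _ => h k
    grind [card_univ, card_le_two]
  have hcard : #(univ \ {i, j, c} : Finset ι) = Fintype.card F - 2 := by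
    rw [card_sdiff_of_subset (subset_univ _), card_univ, hι]
    have : #({i, j, c} : Finset ι) = 3 := by grind
    lia
  simp only [mem_insert, mem_singleton, not_or] at hc
  have hw : ∀ d : {d // d ∈ (univ \ {i, j, c} : Finset ι)}, ∃ y ∈ C, y i = 1 ∧ y j ≠ 0 ∧ y d ≠ 0 ∧
      ∀ l, l ≠ i → l ≠ j → l ≠ c → l ≠ d → y l = 0 := by
    rintro ⟨d, hd⟩
    simp only [mem_sdiff, mem_univ, mem_insert, mem_singleton, not_or, true_and] at hd
    exact hC.exists_normalized_word (by grind) (by grind) (by grind) (by grind) (by grind)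
      (by grind)
  choose y hyC hyi hyj hyd hyz using hw
  have hinj : Function.Injective fun d => y d j := fun d d' hdd => by
    by_contra hne
    have hne' : (d : ι) ≠ d' := fun h => hne (Subtype.ext h)
    have hd := d.2
    simp only [mem_sdiff, mem_univ, mem_insert, mem_singleton, not_or, true_and] at hd
    have := hC.apply_eq_zero (C.sub_mem (hyC d) (hyC d')) c d d' (fun l h₁ h₂ h₃ => by
      by_cases hli : l = i
      · simp [hli, hyi]
      by_cases hlj : l = j
      · simpa [hlj, sub_eq_zero] using hdd
      simp [hyz d l hli hlj h₁ h₂, hyz d' l hli hlj h₁ h₃]) d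
    rw [Pi.sub_apply, hyz d' d hd.1 hd.2.1 hd.2.2 hne', sub_zero] at this
    exact hyd d this
  have hkey d x := hC.map_mul_apply he hes h0 (hyC d) (hyi d) (hyz d) x
  have hs {x : F} (hx : x ≠ 0) : s j x ≠ 0 := fun h => hx ((s j).injective (h.trans (h0 j).symm))
  obtain ⟨d₀⟩ : Nonempty {d // d ∈ (univ \ {i, j, c} : Finset ι)} := by
    rw [← Fintype.card_pos_iff, Fintype.card_coe]
    lia
  let r : {d // d ∈ (univ \ {i, j, c} : Finset ι)} → multipliers (s j) := fun d =>
    ⟨Units.mk0 (y d j) (hyj d) / Units.mk0 (y d₀ j) (hyj d₀),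
      Units.mk0 (s j (y d j)) (hs (hyj d)) / Units.mk0 (s j (y d₀ j)) (hs (hyj d₀)), fun x => by
        have h₁ := hkey d (x / y d₀ j)
        have h₂ := hkey d₀ (x / y d₀ j)
        rw [div_mul_cancel₀ _ (hyj d₀)] at h₂
        have h₃ := hs (hyj d₀)
        have h₄ : y d j / y d₀ j * x = x / y d₀ j * y d j := by ring
        simp only [Units.val_div_eq_div_val, Units.val_mk0]
        rw [h₄, h₁, h₂]
        field_simp⟩
  have hr : Function.Injective r := fun d d' h => hinj (by
    have := congrArg (fun z : multipliers (s j) => ((z : Fˣ) : F)) h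
    simpa [r, div_left_inj' (hyj d₀)] using this)
  have hle := Nat.card_le_card_of_injective r hr
  rw [Nat.card_eq_fintype_card, Fintype.card_coe, hcard] at hle
  have hmul := (multipliers (s j)).card_mul_index
  rw [Nat.card_units, Nat.card_eq_fintype_card (α := F)] at hmul
  rw [← Subgroup.index_eq_one]
  by_contra hne
  have h2 : 2 ≤ (multipliers (s j)).index := by
    have : (multipliers (s j)).index ≠ 0 := fun h => by rw [h] at hmul; lia
    lia
  have := Nat.mul_le_mul hle h2
  lia

/-- A permutation of a field which is additive and all of whose multiplications are carried to
multiplications is, up to a scalar, a field automorphism. -/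
theorem exists_ringEquiv {σ : Equiv.Perm F} (hadd : ∀ x y, σ (x + y) = σ x + σ y)
    (hmul : multipliers σ = ⊤) : ∃ τ : F ≃+* F, ∀ x, σ x = σ 1 * τ x := by
  have h0 : σ 0 = 0 := by simpa using hadd 0 0
  have h1 : σ 1 ≠ 0 := fun h => one_ne_zero (σ.injective (h.trans h0.symm))
  have hm (a x : F) : σ 1 * σ (a * x) = σ a * σ x := by
    by_cases ha : a = 0
    · simp [ha, h0]
    obtain ⟨b, hb⟩ : Units.mk0 a ha ∈ multipliers σ := hmul ▸ Subgroup.mem_top _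
    have hb1 := hb 1
    simp only [Units.val_mk0, mul_one] at hb hb1
    rw [hb, hb1]
    ring
  refine ⟨{ toEquiv := σ.trans (Equiv.mulLeft₀ (σ 1)⁻¹ (inv_ne_zero h1))
            map_mul' := fun x y => ?_
            map_add' := fun x y => ?_ }, fun x => ?_⟩
  · have := hm x y
    change (σ 1)⁻¹ * σ (x * y) = (σ 1)⁻¹ * σ x * ((σ 1)⁻¹ * σ y)
    field_simp
    linear_combination this
  · simp [hadd, mul_add]
  · change σ x = σ 1 * ((σ 1)⁻¹ * σ x)
    rw [mul_inv_cancel_left₀ h1]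

/-- Every zero-fixing monomial map preserving a long distance-four MDS code is semilinear. -/
theorem exists_semilinear (hC : IsDistanceFourMDS C) [Fintype ι] [Fintype F]
    (hF : 4 ≤ Fintype.card F) (hι : Fintype.card ι = Fintype.card F + 1)
    (he : ∀ v ∈ C, e v ∈ C) (hes : ∀ v i, e v (π i) = s i (v i)) (h0 : ∀ i, s i 0 = 0) :
    ∃ τ : F ≃+* F, ∀ i x, s i x = s i 1 * τ x := by
  have : Nontrivial ι := by
    rw [← Fintype.one_lt_card_iff_nontrivial]
    lia
  obtain ⟨i₀, j, hij₀⟩ := exists_pair_ne ι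
  obtain ⟨τ, hτ⟩ := exists_ringEquiv (fun x y => hC.map_add (by lia) he hes h0 j x y)
    (hC.multipliers_eq_top hF hι he hes h0 hij₀)
  refine ⟨τ, fun i x => ?_⟩
  by_cases hij : i = j
  · exact hij ▸ hτ x
  have hs (k : ι) {x : F} (hx : x ≠ 0) : s k x ≠ 0 := fun h =>
    hx ((s k).injective (h.trans (h0 k).symm))
  obtain ⟨c, hc⟩ : ∃ c, c ∉ ({i, j} : Finset ι) := by
    by_contra! h
    have := card_le_card (s := univ) (t := {i, j}) fun k _ => h k
    grind [card_univ, card_le_two]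
  obtain ⟨d, hd⟩ : ∃ d, d ∉ ({i, j, c} : Finset ι) := by
    by_contra! h
    have := card_le_card (s := univ) (t := {i, j, c}) fun k _ => h k
    grind [card_univ, card_le_three]
  simp only [mem_insert, mem_singleton, not_or] at hc hd
  obtain ⟨y, hy, hyi, hyj, -, hyz⟩ := hC.exists_normalized_word (i := i) (j := j) (c := c) (d := d)
    (by grind) (by grind) (by grind) (by grind) (by grind) (by grind)
  have h := hC.map_mul_apply he hes h0 hy hyi hyz x
  have h₁ := hs i one_ne_zero
  have h₂ := hs j one_ne_zero
  have h₃ : τ (y j) ≠ 0 := by simpa using hyj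
  rw [hτ (x * y j), hτ (y j), map_mul] at h
  field_simp at h
  linear_combination -h

end IsDistanceFourMDS

/-- A family enumerating the elements of norm one of the quadratic extension `K` of `F`. -/
structure IsUnitCircle (F : Type*) {K ι : Type*} [Field F] [Fintype F] [Field K] [Algebra F K]
    [Fintype ι] (u : ι → K) : Prop where
  injective : Function.Injective u
  pow_eq_one : ∀ i, u i ^ (Fintype.card F + 1) = 1
  card_eq : Fintype.card ι = Fintype.card F + 1
  finrank_eq : Module.finrank F K = 2

/-- The code of the words `c + Tr(δ u)`. -/
noncomputable def traceCode (F : Type*) {K ι : Type*} [Field F] [Field K] [Algebra F K]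
    (u : ι → K) :
    Submodule F (ι → F) :=
  LinearMap.range (M := F × K) (LinearMap.pi fun i =>
    LinearMap.fst F F K + Algebra.trace F K ∘ₗ LinearMap.mulRight F (u i) ∘ₗ LinearMap.snd F F K)

/-- The code with parity checks `1` and `u`. -/
def checkCode (F : Type*) {K ι : Type*} [Field F] [Field K] [Algebra F K] [Fintype ι] (u : ι → K) :
    Submodule F (ι → F) :=
  LinearMap.ker (Fintype.linearCombination F fun i => ((1 : F), u i))

section

variable {F K ι : Type*} [Field F] [Field K] [Algebra F K] [Fintype ι] {u : ι → K}

omit [Fintype ι] in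
theorem mem_traceCode {w : ι → F} :
    w ∈ traceCode F u ↔ ∃ (c : F) (δ : K), ∀ i, w i = c + Algebra.trace F K (δ * u i) := by
  simp [traceCode, funext_iff, eq_comm]

theorem mem_checkCode {y : ι → F} :
    y ∈ checkCode F u ↔ ∑ i, y i = 0 ∧ ∑ i, y i • u i = 0 := by
  simp [checkCode, Fintype.linearCombination_apply, Prod.ext_iff, Prod.fst_sum, Prod.snd_sum]

theorem sum_trace_mul (c : F) (δ : K) (y : ι → F) :
    ∑ i, (c + Algebra.trace F K (δ * u i)) * y i =
      c * ∑ i, y i + Algebra.trace F K (δ * ∑ i, y i • u i) := by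
  simp only [add_mul, sum_add_distrib, mul_sum, map_sum, mul_smul_comm, map_smul, smul_eq_mul]
  congr 1
  exact sum_congr rfl fun i _ => mul_comm _ _

theorem dualSet_traceCode [FiniteDimensional F K] [Algebra.IsSeparable F K] :
    dualSet (traceCode F u : Set (ι → F)) = checkCode F u := by
  ext y
  simp only [dualSet, SetLike.mem_coe, mem_traceCode, mem_checkCode, Set.mem_ofPred_eq]
  constructor
  · intro h
    have hk c δ : c * ∑ i, y i + Algebra.trace F K (δ * ∑ i, y i • u i) = 0 := by
      rw [← sum_trace_mul]
      exact h _ ⟨c, δ, fun _ => rfl⟩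
    refine ⟨by simpa using hk 1 0, ?_⟩
    refine (traceForm_nondegenerate F K).2 _ fun δ => ?_
    have h0 := hk 0 δ
    rwa [zero_mul, zero_add] at h0
  · rintro ⟨h₁, h₂⟩ w ⟨c, δ, hw⟩
    simp only [hw, sum_trace_mul, h₁, h₂, mul_zero, map_zero, add_zero]

theorem mem_traceCode_of_forall_checkCode {w : ι → F}
    (hw : ∀ y ∈ checkCode F u, ∑ i, w i * y i = 0) [FiniteDimensional F K]
    [Algebra.IsSeparable F K] : w ∈ traceCode F u := by
  classical
  by_contra h
  obtain ⟨f, hf, hle⟩ := Submodule.exists_le_ker_of_notMem h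
  have hfs (v : ι → F) : f v = ∑ i, v i * f (Pi.single i 1) := by
    conv_lhs => rw [pi_eq_sum_univ' v]
    simp [Pi.single]
  refine hf ?_
  rw [hfs]
  refine hw (fun i => f (Pi.single i 1)) ?_
  rw [← SetLike.mem_coe, ← dualSet_traceCode]
  intro x hx
  rw [← hfs]
  exact hle hx

end

namespace IsUnitCircle

variable {F K ι : Type*} [Field F] [Fintype F] [Field K] [Algebra F K] [Fintype ι] {u : ι → K}

theorem finite (hu : IsUnitCircle F u) : Finite K :=
  have : FiniteDimensional F K := Module.finite_of_finrank_eq_succ hu.finrank_eq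
  Module.finite_of_finite F

theorem algebraMap_trace (hu : IsUnitCircle F u) (x : K) :
    algebraMap F K (Algebra.trace F K x) = x + x ^ Fintype.card F := by
  have := hu.finite
  rw [FiniteField.algebraMap_trace_eq_sum_pow, hu.finrank_eq]
  simp [sum_range_succ]

theorem ne_zero (hu : IsUnitCircle F u) (i : ι) : u i ≠ 0 := fun h => by
  simpa [h] using hu.pow_eq_one i

theorem pow_card (hu : IsUnitCircle F u) (i : ι) : u i ^ Fintype.card F = (u i)⁻¹ := by
  refine eq_inv_of_mul_eq_one_left ?_
  rw [← pow_succ]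
  exact hu.pow_eq_one i

theorem exists_eq (hu : IsUnitCircle F u) {x : K} (hx : x ^ (Fintype.card F + 1) = 1) :
    ∃ i, u i = x := by
  classical
  have hsub : univ.image u ⊆ Polynomial.nthRootsFinset (Fintype.card F + 1) 1 := fun y hy => by
    obtain ⟨i, -, rfl⟩ := mem_image.1 hy
    exact (Polynomial.mem_nthRootsFinset (Nat.succ_pos _) _).2 (hu.pow_eq_one i)
  have heq := eq_of_subset_of_card_le hsub (by
    rw [card_image_of_injective _ hu.injective, card_univ, hu.card_eq,
      Polynomial.nthRootsFinset_def]
    exact (Multiset.toFinset_card_le _).trans (Polynomial.card_nthRoots _ _))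
  have := heq ▸ (Polynomial.mem_nthRootsFinset (Nat.succ_pos _) _).2 hx
  simpa using this

theorem pow_card_sub_one_pow (hu : IsUnitCircle F u) {δ : K} (hδ : δ ≠ 0) :
    (δ ^ (Fintype.card F - 1)) ^ (Fintype.card F + 1) = 1 := by
  have := hu.finite
  have := Fintype.ofFinite K
  have hK : Fintype.card K = Fintype.card F ^ 2 := by
    rw [Module.card_eq_pow_finrank (K := F), hu.finrank_eq]
  rw [← pow_mul, mul_comm, ← Nat.sq_sub_sq _ 1, one_pow, ← hK]
  exact FiniteField.pow_card_sub_one_eq_one δ hδ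

omit [Algebra F K] in
theorem pow_card_eq (δ : K) :
    δ ^ Fintype.card F = δ * δ ^ (Fintype.card F - 1) := by
  rw [← pow_succ', Nat.sub_add_cancel Fintype.card_pos]

theorem algebraMap_trace_mul (hu : IsUnitCircle F u) (δ : K) (i : ι) :
    algebraMap F K (Algebra.trace F K (δ * u i)) = δ * u i + δ ^ Fintype.card F * (u i)⁻¹ := by
  rw [hu.algebraMap_trace, mul_pow, hu.pow_card]

variable [CharP K 2]

theorem trace_eq_zero_iff (hu : IsUnitCircle F u) {δ : K} (hδ : δ ≠ 0) (i : ι) :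
    Algebra.trace F K (δ * u i) = 0 ↔ u i ^ 2 = δ ^ (Fintype.card F - 1) := by
  have := hu.ne_zero i
  rw [← map_eq_zero (algebraMap F K), hu.algebraMap_trace_mul, CharTwo.add_eq_zero, pow_card_eq]
  field_simp

theorem exists_trace_eq_zero (hu : IsUnitCircle F u) (δ : K) :
    ∃ i, Algebra.trace F K (δ * u i) = 0 := by
  by_cases hδ : δ = 0
  · obtain ⟨i, -⟩ := hu.exists_eq (one_pow _)
    exact ⟨i, by simp [hδ]⟩
  have := hu.finite
  obtain ⟨r, hr⟩ := FiniteField.isSquare_of_char_two (ringChar.eq K 2) (δ ^ (Fintype.card F - 1))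
  have hr1 : r ^ (Fintype.card F + 1) = 1 := by
    apply CharTwo.sq_injective
    dsimp only
    rw [← pow_mul, mul_comm, pow_mul, sq, ← hr, hu.pow_card_sub_one_pow hδ, one_pow]
  obtain ⟨i, rfl⟩ := hu.exists_eq hr1
  exact ⟨i, (hu.trace_eq_zero_iff hδ i).2 (by rw [hr, sq])⟩

theorem eq_of_trace_eq_zero (hu : IsUnitCircle F u) {δ : K} (hδ : δ ≠ 0) {i j : ι}
    (hi : Algebra.trace F K (δ * u i) = 0) (hj : Algebra.trace F K (δ * u j) = 0) : i = j := by
  rw [hu.trace_eq_zero_iff hδ] at hi hj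
  exact hu.injective (CharTwo.sq_injective (hi.trans hj.symm))

omit [CharP K 2] in
theorem nontrivial (hu : IsUnitCircle F u) : Nontrivial ι := by
  rw [← Fintype.one_lt_card_iff_nontrivial, hu.card_eq]
  have := Fintype.card_pos (α := F)
  lia

theorem eq_of_forall_trace_eq (hu : IsUnitCircle F u) {δ δ' : K}
    (h : ∀ i, Algebra.trace F K (δ * u i) = Algebra.trace F K (δ' * u i)) : δ = δ' := by
  have := hu.nontrivial
  obtain ⟨i, j, hij⟩ := exists_pair_ne ι
  by_contra hne
  have hk k : Algebra.trace F K ((δ - δ') * u k) = 0 := by rw [sub_mul, map_sub, h, sub_self]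
  exact hij (hu.eq_of_trace_eq_zero (sub_ne_zero.2 hne) (hk i) (hk j))

/-- A word `c + Tr(δ u)` with `c ≠ 0` does not vanish at exactly one coordinate. -/
theorem exists_ne_of_add_trace_eq_zero (hu : IsUnitCircle F u) {c : F} (hc : c ≠ 0) {δ : K} {i : ι}
    (hi : c + Algebra.trace F K (δ * u i) = 0) :
    ∃ j ≠ i, c + Algebra.trace F K (δ * u j) = 0 := by
  have hδ : δ ≠ 0 := by
    rintro rfl
    simp [hc] at hi
  obtain ⟨j, hj⟩ := hu.exists_eq (x := (u i)⁻¹ * δ ^ (Fintype.card F - 1)) (by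
    rw [mul_pow, hu.pow_card_sub_one_pow hδ, inv_pow, hu.pow_eq_one, inv_one, one_mul])
  have hui := hu.ne_zero i
  refine ⟨j, ?_, ?_⟩
  · rintro rfl
    refine hc ?_
    rwa [(hu.trace_eq_zero_iff hδ j).2, add_zero] at hi
    rw [sq]
    nth_rw 1 [hj]
    field_simp
  · have : Algebra.trace F K (δ * u j) = Algebra.trace F K (δ * u i) := by
      apply (algebraMap F K).injective
      rw [hu.algebraMap_trace_mul, hu.algebraMap_trace_mul, pow_card_eq, hj]
      field_simp
      ring
    rw [this, hi]

omit [CharP K 2] in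
theorem eq_zero_of_three_terms (hu : IsUnitCircle F u) {i j k : ι} (hik : i ≠ k) (hjk : j ≠ k)
    {a b c : F} (h₁ : a + b + c = 0) (h₂ : a • u i + b • u j + c • u k = 0) : c = 0 := by
  have h₃ := congrArg (FiniteField.frobeniusAlgHom F K) h₂
  simp only [map_add, map_smul, map_zero, FiniteField.coe_frobeniusAlgHom, hu.pow_card] at h₃
  replace h₁ := congrArg (algebraMap F K) h₁
  simp only [Algebra.smul_def, map_add, map_zero] at h₁ h₂ h₃
  have hi := hu.ne_zero i
  have hj := hu.ne_zero j
  have hk := hu.ne_zero k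
  field_simp at h₃
  have h : algebraMap F K c * ((u k - u i) * (u k - u j)) = 0 := by
    linear_combination u k * (h₂ - (u i + u j) * h₁) + h₃
  simpa [sub_eq_zero, hu.injective.eq_iff, hik.symm, hjk.symm] using h

omit [CharP K 2] in
theorem eq_zero_of_card_le_three (hu : IsUnitCircle F u) {y : ι → F} (hy : y ∈ checkCode F u)
    {s : Finset ι} (hs : #s ≤ 3) (hz : ∀ l ∉ s, y l = 0) : y = 0 := by
  classical
  have hcard : 2 ≤ Fintype.card F := Fintype.one_lt_card
  obtain ⟨t, hst, -, ht⟩ := exists_subsuperset_card_eq (subset_univ s) hs (by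
    rw [card_univ, hu.card_eq]; lia)
  obtain ⟨i, j, k, hij, hik, hjk, rfl⟩ := card_eq_three.1 ht
  have hz' : ∀ l ∉ ({i, j, k} : Finset ι), y l = 0 := fun l hl => hz l fun h => hl (hst h)
  obtain ⟨h₁, h₂⟩ := mem_checkCode.1 hy
  rw [← sum_subset (subset_univ {i, j, k}) fun l _ hl => hz' l hl] at h₁
  rw [← sum_subset (subset_univ {i, j, k}) fun l _ hl => by simp [hz' l hl]] at h₂
  rw [sum_insert (by simp [hij, hik]), sum_pair hjk] at h₁ h₂
  have hk : y k = 0 := hu.eq_zero_of_three_terms hik hjk (a := y i) (b := y j)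
    (by rw [← h₁]; ring) (by rw [← h₂]; abel)
  have hj : y j = 0 := hu.eq_zero_of_three_terms hij hjk.symm (a := y i) (b := y k)
    (by rw [← h₁]; ring) (by rw [← h₂]; abel)
  have hi : y i = 0 := by simpa [hk, hj] using h₁
  ext l
  by_cases hl : l ∈ ({i, j, k} : Finset ι)
  · simp only [mem_insert, mem_singleton] at hl
    obtain rfl | rfl | rfl := hl <;> simpa
  · exact hz' l hl

omit [CharP K 2] in
theorem isDistanceFourMDS (hu : IsUnitCircle F u) : IsDistanceFourMDS (checkCode F u) where
  eq_zero _ hy _ hs hz := hu.eq_zero_of_card_le_three hy hs hz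
  exists_word s hs := by
    classical
    have : FiniteDimensional F K := Module.finite_of_finrank_eq_succ hu.finrank_eq
    have hker : LinearMap.ker (Fintype.linearCombination F (fun i => ((1 : F), u i)) ∘ₗ
        Function.ExtendByZero.linearMap F ((↑) : s → ι)) ≠ ⊥ :=
      LinearMap.ker_ne_bot_of_finrank_lt (by
        rw [Module.finrank_prod, hu.finrank_eq, Module.finrank_self,
          Module.finrank_fintype_fun_eq_card, Fintype.card_coe, hs]
        lia)
    obtain ⟨z, hz, hz0⟩ := (Submodule.ne_bot_iff _).1 hker
    have hy : Function.extend ((↑) : s → ι) z 0 ∈ checkCode F u := hz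
    have hout : ∀ l ∉ s, Function.extend ((↑) : s → ι) z 0 l = 0 := fun l hl =>
      Function.extend_apply' _ _ _ (by simpa using hl)
    refine ⟨_, hy, fun l hl h => hz0 ?_, hout⟩
    have h0 := hu.eq_zero_of_card_le_three hy (s := s.erase l) (by
      rw [card_erase_of_mem hl, hs]) fun k hk => by
        by_cases hkl : k = l
        · rwa [hkl]
        · exact hout k fun hks => hk (mem_erase.2 ⟨hkl, hks⟩)
    ext k
    rw [← Subtype.val_injective.extend_apply z 0 k, h0]
    rfl

end IsUnitCircle

/-- Two monomial semilinear descriptions of the same map coincide. -/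
theorem monomial_semilinear_unique {F ι : Type*} [Field F] {e : Equiv.Perm (ι → F)}
    {π π' : Equiv.Perm ι} {τ τ' : F ≃+* F} {c c' : ι → F} [Nonempty ι] (hc : ∀ i, c i ≠ 0)
    (he : ∀ v i, e v i = c i * τ (v (π⁻¹ i))) (he' : ∀ v i, e v i = c' i * τ' (v (π'⁻¹ i))) :
    π = π' ∧ τ = τ' ∧ c = c' := by
  classical
  have h v i := (he v i).symm.trans (he' v i)
  have hπ : π = π' := by
    rw [← inv_inj]
    ext i
    by_contra hne
    have := h (Pi.single (π⁻¹ i) 1) i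
    rw [Pi.single_eq_same, Pi.single_eq_of_ne (Ne.symm hne)] at this
    simp [hc] at this
  subst hπ
  have hcc : c = c' := by
    ext i
    simpa using h 1 i
  subst hcc
  refine ⟨rfl, RingEquiv.ext fun x => ?_, rfl⟩
  obtain ⟨i⟩ := ‹Nonempty ι›
  exact mul_left_cancel₀ (hc i) (h (fun _ => x) i)

/-- The permutation `g` of `K` describes the action of the contragredient of the semilinear
automorphism `e` on the words `Tr(δ u)`. -/
def IsContragredient {F K ι : Type*} [Field F] [Field K] [Algebra F K]
    (u : ι → K) (e : Equiv.Perm (ι → F)) (g : Equiv.Perm K) : Prop :=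
  ∃ (π : Equiv.Perm ι) (τ : F ≃+* F) (c : ι → F), (∀ i, c i ≠ 0) ∧
    (∀ v i, e v i = c i * τ (v (π⁻¹ i))) ∧
    ∀ δ i, c i * Algebra.trace F K (g δ * u i) = τ (Algebra.trace F K (δ * u (π⁻¹ i)))

theorem IsContragredient.mul {F K ι : Type*} [Field F] [Field K] [Algebra F K]
    {u : ι → K} {e e' : Equiv.Perm (ι → F)}
    {g g' : Equiv.Perm K} (hg : IsContragredient u e g) (hg' : IsContragredient u e' g') :
    IsContragredient u (e * e') (g * g') := by
  obtain ⟨π, τ, c, hc, he, h⟩ := hg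
  obtain ⟨π', τ', c', hc', he', h'⟩ := hg'
  refine ⟨π * π', τ'.trans τ, fun i => c i * τ (c' (π⁻¹ i)), fun i => by simp [hc, hc'],
    fun v i => ?_, fun δ i => ?_⟩
  · simp [he, he', mul_assoc]
  · have h₁ := h (g' δ) i
    have h₂ := h' δ (π⁻¹ i)
    simp only [Equiv.Perm.mul_apply, mul_inv_rev, RingEquiv.trans_apply]
    rw [← h₂, map_mul τ, ← h₁]
    ring

namespace IsUnitCircle

variable {F K ι : Type*} [Field F] [Fintype F] [Field K] [Algebra F K] [Fintype ι] {u : ι → K}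
  [CharP K 2]

theorem exists_isContragredient (hu : IsUnitCircle F u) [FiniteDimensional F K]
    [Algebra.IsSeparable F K] {e : Equiv.Perm (ι → F)}
    (he : e ∈ autSSet (checkCode F u : Set (ι → F))) : ∃ g, IsContragredient u e g := by
  obtain ⟨⟨π, τ, c, hc, hec⟩, himg⟩ := he
  have hdual (δ : K) : ∃ δ' : K, ∀ i,
      c i * Algebra.trace F K (δ' * u i) = τ (Algebra.trace F K (δ * u (π⁻¹ i))) := by
    have hmem : (fun i => (c i)⁻¹ * τ (Algebra.trace F K (δ * u (π⁻¹ i)))) ∈ traceCode F u := by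
      refine mem_traceCode_of_forall_checkCode fun y hy => ?_
      rw [← SetLike.mem_coe, ← himg] at hy
      obtain ⟨y, hy, rfl⟩ := hy
      have hδ := sum_trace_mul (u := u) 0 δ y
      rw [(mem_checkCode.1 hy).1, (mem_checkCode.1 hy).2] at hδ
      simp only [zero_add, mul_zero, map_zero] at hδ
      rw [← map_zero τ, ← hδ, map_sum,
        ← Equiv.sum_comp π⁻¹ fun i => τ (Algebra.trace F K (δ * u i) * y i)]
      refine sum_congr rfl fun i _ => ?_
      have := hc i
      rw [hec, map_mul τ]
      field_simp
    obtain ⟨a, δ', hδ'⟩ := mem_traceCode.1 hmem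
    have hzero i : a + Algebra.trace F K (δ' * u i) = 0 ↔
        Algebra.trace F K (δ * u (π⁻¹ i)) = 0 := by
      rw [← hδ']
      simp [hc]
    have ha : a = 0 := by
      by_contra ha
      by_cases hδ : δ = 0
      · obtain ⟨i, hi⟩ := hu.exists_trace_eq_zero δ'
        have := (hzero i).2 (by simp [hδ])
        rw [hi, add_zero] at this
        exact ha this
      · obtain ⟨i, hi⟩ := hu.exists_trace_eq_zero δ
        obtain ⟨j, hj, hj0⟩ := hu.exists_ne_of_add_trace_eq_zero ha
          ((hzero (π i)).2 (by simpa using hi))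
        refine hj ?_
        rw [← hu.eq_of_trace_eq_zero hδ ((hzero j).1 hj0) hi]
        simp
    refine ⟨δ', fun i => ?_⟩
    have := hδ' i
    rw [ha, zero_add] at this
    rw [← this, mul_inv_cancel_left₀ (hc i)]
  choose g hg using hdual
  have hinj : Function.Injective g := fun δ δ' h => hu.eq_of_forall_trace_eq fun i => by
    have h₁ := hg δ (π i)
    rw [h, hg δ' (π i)] at h₁
    simpa using h₁.symm
  have := hu.finite
  exact ⟨Equiv.ofBijective g (Finite.injective_iff_bijective.1 hinj), π, τ, c, hc, hec, hg⟩

theorem isContragredient_unique (hu : IsUnitCircle F u) {e : Equiv.Perm (ι → F)}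
    {g g' : Equiv.Perm K} (hg : IsContragredient u e g) (hg' : IsContragredient u e g') :
    g = g' := by
  have := hu.nontrivial
  obtain ⟨π, τ, c, hc, he, h⟩ := hg
  obtain ⟨π', τ', c', hc', he', h'⟩ := hg'
  obtain ⟨rfl, rfl, rfl⟩ := monomial_semilinear_unique hc he he'
  ext δ
  exact hu.eq_of_forall_trace_eq fun i => mul_left_cancel₀ (hc i) ((h δ i).trans (h' δ i).symm)

theorem isContragredient_injective (hu : IsUnitCircle F u) [FiniteDimensional F K]
    [Algebra.IsSeparable F K] {e e' : Equiv.Perm (ι → F)}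
    {g : Equiv.Perm K} (hg : IsContragredient u e g) (hg' : IsContragredient u e' g) :
    e = e' := by
  obtain ⟨π, τ, c, hc, he, h⟩ := hg
  obtain ⟨π', τ', c', hc', he', h'⟩ := hg'
  have hzero δ i : Algebra.trace F K (δ * u (π⁻¹ i)) = 0 ↔
      Algebra.trace F K (δ * u (π'⁻¹ i)) = 0 := by
    rw [← map_eq_zero τ, ← h, ← map_eq_zero τ' (a := Algebra.trace F K (δ * u (π'⁻¹ i))), ← h']
    simp [hc, hc']
  have hπ : π = π' := by
    rw [← inv_inj]
    ext i
    obtain ⟨j, hj⟩ := hu.exists_trace_eq_zero (F := F) 1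
    have hui := hu.ne_zero (π⁻¹ i)
    have hx : Algebra.trace F K (u j / u (π⁻¹ i) * u (π⁻¹ i)) = 0 := by
      rwa [div_mul_cancel₀ _ hui, ← one_mul (u j)]
    exact hu.eq_of_trace_eq_zero (div_ne_zero (hu.ne_zero j) hui) hx ((hzero _ i).1 hx)
  subst hπ
  have hval i (x : F) : c i * τ' x = c' i * τ x := by
    obtain ⟨δ, hδ⟩ := Algebra.trace_surjective F K x
    have hui := hu.ne_zero (π⁻¹ i)
    have h₁ := h (δ / u (π⁻¹ i)) i
    have h₂ := h' (δ / u (π⁻¹ i)) i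
    rw [div_mul_cancel₀ _ hui, hδ] at h₁ h₂
    rw [← h₁, ← h₂]
    ring
  have hcc i : c i = c' i := by simpa using hval i 1
  ext v i
  rw [he, he', hcc, ← hval, hcc]

theorem mem_gammaLSet_of_isContragredient (hu : IsUnitCircle F u) {e : Equiv.Perm (ι → F)}
    {g : Equiv.Perm K} (hg : IsContragredient u e g) : g ∈ gammaLSet F K := by
  obtain ⟨π, τ, c, hc, he, h⟩ := hg
  refine ⟨τ, fun x y => ?_, fun a x => ?_⟩ <;>
    refine hu.eq_of_forall_trace_eq fun i => mul_left_cancel₀ (hc i) ?_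
  · simp only [h, add_mul, map_add, mul_add]
  · rw [h]
    simp only [← Algebra.smul_def, smul_mul_assoc, map_smul, smul_eq_mul, map_mul, ← h]
    ring

end IsUnitCircle

/-- The group of zero-fixing automorphisms of a code. -/
def aut0Subgroup {F : Type*} [Zero F] {ι : Type*} (C : Set (ι → F)) :
    Subgroup (Equiv.Perm (ι → F)) where
  carrier := aut0Set C
  one_mem' := ⟨⟨1, fun _ => 1, fun _ => rfl, fun _ _ => rfl⟩, by simp⟩
  mul_mem' := by
    rintro e e' ⟨⟨π, σ, h0, he⟩, hC⟩ ⟨⟨π', σ', h0', he'⟩, hC'⟩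
    refine ⟨⟨π * π', fun i => σ i * σ' (π⁻¹ i), fun i => by simp [h0, h0'], fun v i => ?_⟩, ?_⟩
    · simp [he, he']
    · rw [Equiv.Perm.coe_mul, Set.image_comp, hC', hC]
  inv_mem' := by
    rintro e ⟨⟨π, σ, h0, he⟩, hC⟩
    refine ⟨⟨π⁻¹, fun i => (σ (π i))⁻¹, fun i => ?_, fun v i => ?_⟩, ?_⟩
    · rw [Equiv.Perm.inv_eq_iff_eq, h0]
    · rw [Equiv.Perm.eq_inv_iff_eq]
      have := he (e⁻¹ v) (π i)
      simpa using this.symm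
    · nth_rw 1 [← hC]
      simp [← Set.image_comp]

/-- The general semilinear group as a group of permutations. -/
def gammaLSubgroup (F K : Type*) [Field F] [Field K] [Algebra F K] : Subgroup (Equiv.Perm K) where
  carrier := gammaLSet F K
  one_mem' := ⟨RingEquiv.refl F, by simp, by simp⟩
  mul_mem' := by
    rintro e e' ⟨τ, hadd, hsmul⟩ ⟨τ', hadd', hsmul'⟩
    exact ⟨τ'.trans τ, by simp [hadd, hadd'], by simp [hsmul, hsmul']⟩
  inv_mem' := by
    rintro e ⟨τ, hadd, hsmul⟩
    refine ⟨τ.symm, fun x y => ?_, fun a x => ?_⟩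
    · rw [Equiv.Perm.inv_eq_iff_eq, hadd]
      simp
    · rw [Equiv.Perm.inv_eq_iff_eq, hsmul]
      simp

section

variable {F K : Type*} [Field F] [Field K] [Algebra F K]

theorem ne_zero_of_mem_gammaLSubgroup (e : gammaLSubgroup F K) {x : K} (hx : x ≠ 0) :
    (e : Equiv.Perm K) x ≠ 0 := by
  obtain ⟨e, τ, hadd, -⟩ := e
  have h0 : e 0 = 0 := by simpa using hadd 0 0
  exact fun h => hx (e.injective (h.trans h0.symm))

variable (F K) in
/-- The field automorphism associated to a semilinear map. -/
noncomputable def gammaLToRingAut : gammaLSubgroup F K →* RingAut F :=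
  MonoidHom.mk' (fun e => e.2.choose) fun e e' => by
    have h' := (e * e').2.choose_spec.2
    ext a
    apply (algebraMap F K).injective
    refine mul_right_cancel₀ (ne_zero_of_mem_gammaLSubgroup (e * e') one_ne_zero) ?_
    rw [← h']
    change e.1 (e'.1 (algebraMap F K a * 1)) =
      algebraMap F K (e.2.choose (e'.2.choose a)) * e.1 (e'.1 1)
    rw [e'.2.choose_spec.2, e.2.choose_spec.2]

theorem gammaLToRingAut_spec (e : gammaLSubgroup F K) (a : F) (x : K) :
    (e : Equiv.Perm K) (algebraMap F K a * x) =
      algebraMap F K (gammaLToRingAut F K e a) * (e : Equiv.Perm K) x :=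
  e.2.choose_spec.2 a x

theorem card_ringAut_dvd [Fintype F] {m : ℕ} (hF : Fintype.card F = 2 ^ m) :
    Nat.card (RingAut F) ∣ m := by
  have := charP_of_card_eq_prime_pow hF
  let _ : Algebra (ZMod 2) F := ZMod.algebra F 2
  let f : RingAut F →* (F ≃ₐ[ZMod 2] F) :=
    { toFun := fun τ => AlgEquiv.ofRingEquiv (f := τ) fun a =>
        RingHom.congr_fun (Subsingleton.elim ((τ : F →+* F).comp (algebraMap (ZMod 2) F))
          (algebraMap (ZMod 2) F)) a
      map_one' := rfl
      map_mul' := fun _ _ => rfl }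
  have hf : Function.Injective f := fun τ τ' h => RingEquiv.ext fun x => AlgEquiv.congr_fun h x
  have hm : Module.finrank (ZMod 2) F = m := by
    have := Module.card_eq_pow_finrank (K := ZMod 2) (V := F)
    rw [hF, ZMod.card] at this
    exact (Nat.pow_right_injective le_rfl this).symm
  rw [← hm, ← IsGalois.card_aut_eq_finrank]
  exact Subgroup.card_dvd_of_injective f hf

variable (F K) in
/-- Semilinear maps with trivial field automorphism are linear. -/
def gammaLKerToLinearEquiv : (gammaLToRingAut F K).ker →* (K ≃ₗ[F] K) where
  toFun e :=
    { (e : Equiv.Perm K) with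
      map_add' := e.1.2.choose_spec.1
      map_smul' := fun a x => by
        have := gammaLToRingAut_spec e.1 a x
        rw [(MonoidHom.mem_ker).1 e.2] at this
        simpa [Algebra.smul_def] using this }
  map_one' := rfl
  map_mul' _ _ := rfl

theorem card_linearEquiv [Fintype F] (h : Module.finrank F K = 2) :
    Nat.card (K ≃ₗ[F] K) =
      (Fintype.card F ^ 2 - 1) * (Fintype.card F ^ 2 - Fintype.card F) := by
  have : FiniteDimensional F K := Module.finite_of_finrank_eq_succ h
  let b := Module.finBasisOfFinrankEq F K h
  rw [← Nat.card_congr (LinearMap.GeneralLinearGroup.generalLinearEquiv F K).toEquiv,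
    Nat.card_congr (Units.mapEquiv (LinearMap.toMatrixAlgEquiv b).toMulEquiv).toEquiv]
  exact (Matrix.card_GL_field 2).trans (by simp [Fin.prod_univ_two])

theorem card_gammaLSubgroup_dvd [Fintype F] (h : Module.finrank F K = 2) {m : ℕ}
    (hF : Fintype.card F = 2 ^ m) : Nat.card (gammaLSubgroup F K) ∣
      m * (Fintype.card F ^ 2 - 1) * (Fintype.card F ^ 2 - Fintype.card F) := by
  have hker : Function.Injective (gammaLKerToLinearEquiv F K) := fun e e' h =>
    Subtype.ext (Subtype.ext (Equiv.ext fun x => LinearEquiv.congr_fun h x))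
  rw [← (gammaLToRingAut F K).ker.card_mul_index, Subgroup.index_ker, mul_assoc, mul_comm m,
    ← card_linearEquiv h]
  exact mul_dvd_mul (Subgroup.card_dvd_of_injective _ hker)
    ((Subgroup.card_subgroup_dvd_card _).trans (card_ringAut_dvd hF))

end

theorem autSSet_subset_autL2Set {F : Type*} [Field F] {ι : Type*} (C : Set (ι → F)) :
    autSSet C ⊆ autL2Set C := by
  rintro e ⟨⟨π, τ, c, hc, he⟩, hC⟩
  exact ⟨⟨π, fun i => τ.toEquiv.trans (Equiv.mulLeft₀ (c i) (hc i)), by simp [mul_add],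
    by simpa using he⟩, hC⟩

theorem autL2Set_subset_aut0Set {F : Type*} [Field F] {ι : Type*} (C : Set (ι → F)) :
    autL2Set C ⊆ aut0Set C := by
  rintro e ⟨⟨π, σ, hadd, he⟩, hC⟩
  exact ⟨⟨π, σ, fun i => by simpa using hadd i 0 0, he⟩, hC⟩

theorem IsUnitCircle.aut0Set_subset_autSSet {F K ι : Type*} [Field F] [Fintype F] [Field K]
    [Algebra F K] [Fintype ι] {u : ι → K} (hu : IsUnitCircle F u)
    (hF : Fintype.card F = 2 ∨ 4 ≤ Fintype.card F) :
    aut0Set (checkCode F u : Set (ι → F)) ⊆ autSSet (checkCode F u : Set (ι → F)) := by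
  classical
  rintro e ⟨⟨π, σ, h0, he⟩, hC⟩
  have hσ : ∃ τ : F ≃+* F, ∀ i x, σ i x = σ i 1 * τ x := by
    obtain hF | hF := hF
    · have h01 (x : F) (hx : x ≠ 0) : x = 1 := by
        simpa [hF] using FiniteField.pow_card_sub_one_eq_one x hx
      refine ⟨RingEquiv.refl F, fun i x => ?_⟩
      by_cases hx : x = 0
      · simp [hx, h0]
      · have h1 : σ i 1 = 1 := h01 _ fun h => one_ne_zero ((σ i).injective (h.trans (h0 i).symm))
        simp [h01 x hx, h1]
    · obtain ⟨τ, hτ⟩ := hu.isDistanceFourMDS.exists_semilinear (e := e) (π := π)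
        (s := fun i => σ (π i)) hF hu.card_eq (fun v hv => by
          rw [← SetLike.mem_coe, ← hC]; exact Set.mem_image_of_mem _ hv)
        (fun v i => by simp [he]) (fun i => h0 _)
      exact ⟨τ, fun i x => by simpa using hτ (π⁻¹ i) x⟩
  obtain ⟨τ, hτ⟩ := hσ
  exact ⟨⟨π, τ, fun i => σ i 1, fun i h => one_ne_zero ((σ i).injective (h.trans (h0 i).symm)),
    fun v i => by rw [he, hτ]⟩, hC⟩

/-- Let `m ≥ 1`, `q = 2^m`, and `M_q = (M_q^⊥)^⊥ ⊆ F_q^{q+1}`.  Every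
zero-fixing automorphism of `M_q` is semilinear, i.e.
`Aut0(M_q) = AutL_2(M_q) = AutS(M_q)`; moreover `Aut0(M_q)` is isomorphic to a subgroup of
the general semilinear group `ΓL(2,q)` (of `F_{q²}` as a 2-dimensional `F_q`-space), so
its order divides `m·(q²−1)·(q²−q)`. -/
theorem stmt_11 (m q : ℕ) (hm : 1 ≤ m) (hq : q = 2 ^ m)
    (F K : Type) [Field F] [Field K] [Fintype F] [Fintype K] [Algebra F K]
    (hcF : Fintype.card F = q) (hcK : Fintype.card K = q ^ 2)
    (α : K) (hα : orderOf α = q ^ 2 - 1)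
    (ζ : K) (hζ : ζ = α ^ (q - 1))
    (Mdual : Set (Fin (q + 1) → F))
    (hM : Mdual = {w | ∃ (c : F) (δ : K), ∀ j : Fin (q + 1),
        w j = c + Algebra.trace F K (δ * ζ ^ ((j : ℕ) + 1))}) :
    aut0Set (dualSet Mdual) = autL2Set (dualSet Mdual) ∧
    autL2Set (dualSet Mdual) = autSSet (dualSet Mdual) ∧
    (∃ f : Equiv.Perm (Fin (q + 1) → F) → Equiv.Perm K,
      Set.MapsTo f (aut0Set (dualSet Mdual)) (gammaLSet F K) ∧
      Set.InjOn f (aut0Set (dualSet Mdual)) ∧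
      ∀ e₁ ∈ aut0Set (dualSet Mdual), ∀ e₂ ∈ aut0Set (dualSet Mdual),
        f (e₁ * e₂) = f e₁ * f e₂) ∧
    Nat.card (aut0Set (dualSet Mdual)) ∣ m * (q ^ 2 - 1) * (q ^ 2 - q) := by
  have hq2 : 2 ≤ q := hq ▸ Nat.le_self_pow (by lia) 2
  have hFcard : Fintype.card F = 2 ^ m := hcF.trans hq
  have hKcard : Fintype.card K = 2 ^ (m * 2) := by rw [hcK, hq, pow_mul]
  have : CharP K 2 := charP_of_card_eq_prime_pow hKcard
  have hfin : Module.finrank F K = 2 := by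
    have := Module.card_eq_pow_finrank (K := F) (V := K)
    rw [hcF, hcK] at this
    exact (Nat.pow_right_injective hq2 this).symm
  have hord : orderOf ζ = q + 1 := by
    have hfac : q ^ 2 - 1 = (q + 1) * (q - 1) := Nat.sq_sub_sq q 1
    have hpos : 0 < q - 1 := by lia
    rw [hζ, orderOf_pow_of_dvd hpos.ne' (by rw [hα, hfac]; exact dvd_mul_left _ _), hα, hfac,
      Nat.mul_div_cancel _ hpos]
  have hζ1 : ζ ^ (q + 1) = 1 := by rw [← hord, pow_orderOf_eq_one]
  have hζ0 : ζ ≠ 0 := by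
    rintro rfl
    simp at hord
  have hu : IsUnitCircle F fun j : Fin (q + 1) => ζ ^ ((j : ℕ) + 1) :=
    { injective := fun i j h => by
        simp only [pow_succ] at h
        have h' := mul_right_cancel₀ hζ0 h
        exact Fin.ext (pow_injOn_Iio_orderOf (hord.symm ▸ i.2) (hord.symm ▸ j.2) h')
      pow_eq_one := fun i => by
        rw [hcF, ← pow_mul, mul_comm, pow_mul, hζ1, one_pow]
      card_eq := by rw [Fintype.card_fin, hcF]
      finrank_eq := hfin }
  have hMT : Mdual = traceCode F fun j : Fin (q + 1) => ζ ^ ((j : ℕ) + 1) := by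
    rw [hM]
    ext w
    exact mem_traceCode.symm
  rw [hMT, dualSet_traceCode]
  set u := fun j : Fin (q + 1) => ζ ^ ((j : ℕ) + 1)
  have h0S := hu.aut0Set_subset_autSSet (by
    rw [hFcard]
    obtain rfl | hm2 := hm.eq_or_lt
    · exact Or.inl rfl
    · exact Or.inr (Nat.pow_le_pow_right (n := 2) two_pos hm2))
  have hS2 := autSSet_subset_autL2Set (checkCode F u : Set (Fin (q + 1) → F))
  have h20 := autL2Set_subset_aut0Set (checkCode F u : Set (Fin (q + 1) → F))
  have hex e (he : e ∈ aut0Set (checkCode F u : Set (Fin (q + 1) → F))) :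
      ∃ g, IsContragredient u e g := hu.exists_isContragredient (h0S he)
  choose! f hf using hex
  have hmaps : Set.MapsTo f (aut0Set (checkCode F u : Set (Fin (q + 1) → F))) (gammaLSet F K) :=
    fun e he => hu.mem_gammaLSet_of_isContragredient (hf e he)
  have hinj : Set.InjOn f (aut0Set (checkCode F u : Set (Fin (q + 1) → F))) :=
    fun e he e' he' h => hu.isContragredient_injective (hf e he) (h ▸ hf e' he')
  have hmul : ∀ e₁ ∈ aut0Set (checkCode F u : Set (Fin (q + 1) → F)),
      ∀ e₂ ∈ aut0Set (checkCode F u : Set (Fin (q + 1) → F)), f (e₁ * e₂) = f e₁ * f e₂ :=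
    fun e₁ h₁ e₂ h₂ => hu.isContragredient_unique
      (hf _ ((aut0Subgroup (checkCode F u : Set (Fin (q + 1) → F))).mul_mem h₁ h₂))
      ((hf _ h₁).mul (hf _ h₂))
  refine ⟨(h0S.trans hS2).antisymm h20, (h20.trans h0S).antisymm hS2, ⟨f, hmaps, hinj, hmul⟩, ?_⟩
  let φ : aut0Subgroup (checkCode F u : Set (Fin (q + 1) → F)) →* gammaLSubgroup F K :=
    MonoidHom.mk' (fun e => ⟨f e, hmaps e.2⟩) fun e e' => Subtype.ext (hmul e e.2 e' e'.2)
  have hφ : Function.Injective φ := fun e e' h =>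
    Subtype.ext (hinj e.2 e'.2 (congrArg Subtype.val h))
  have hdvd := (Subgroup.card_dvd_of_injective φ hφ).trans (card_gammaLSubgroup_dvd hfin hFcard)
  rw [hcF] at hdvd
  exact hdvd
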